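/- Let c = p_r* ∨ p_s* ∨ p_t* (1 ≤ r < s < t ≤ n) be a clause over propositional variables p_1, …, p_n, and let π : {p_1, …, p_n} → {true, false} be a truth assignment. The following are equivalent: (1) π makes at least one of the literals p_r*, p_s*, p_t* true; (2) the network N_c has a solution by connected regions in which, for each i ∈ {r, s, t}, u_i is vertical w.r.t. f_i if and only if π(p_i) = true. -/

import Mathlib

/-!
All regions hanging together in the clause network share the same top line. Two boxes related by
`N_⌜` have the same upper-left corner and neither contains the other (`NetULC.ulc`), so each is
either narrower and deeper or wider and shallower than the other. In a solution of `N_p` this makes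
the region `u_p*` of a false literal wider than its frame, while that of a true literal is narrower
(`NetP.frame` proves the first half, the one that is needed).

*Necessity.* Along `X_c = (w₀, u_r*, w_rs, u_s*, w_st, u_t*, w₁)` each `w` reaches past the left
edge of the next frame and starts before the right edge of the previous one. If all three literals
are false, consecutive boxes therefore leave no gap, and a strip at the top of the bounding box of
`v_c` is covered by them. But `v_c` avoids all seven boxes and its supremum in the `y`-direction is
their common top, a contradiction (`no_gap`). Only inequalities between edges of bounding boxes are
used, and they are read off from the tiles that a constraint allows or forbids.

*Sufficiency.* All regions of the solution are hanging shapes: a box below the line `y = 0` with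
some boxes hanging from that line removed (`hreg`). They are connected because every point can
descend to the free bottom strip (`isPreconnected_hang`), and a CDC constraint between them can be
tested on open sets (`cdc_hreg`), that is, by giving witness points and comparing edges. Most
regions are rectangles (`solV`, `solC`); the auxiliary regions of `N_⌜` are L-shaped
(`netULC_rect`), and `v_c` is a large box minus the seven boxes of `X_c`. A true literal leaves a
gap next to its box (`exists_gap`), through which `v_c` reaches the top line; this is what puts
`v_c` in the tile `E` of `w₀` and in the tile `W` of `w₁`. The tiles `E` and `W` of the other five
regions are met below `w₁` and `w₀`, which are less deep than all of them.
-/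

open Set

/-- A "region" variable ranges over subsets of the plane ℝ². -/
abbrev Reg : Type := Set (ℝ × ℝ)

/-- `x⁻(a)`: infimum of first coordinates of points of `a`. -/
noncomputable def xm (a : Reg) : ℝ := sInf (Prod.fst '' a)
/-- `x⁺(a)`: supremum of first coordinates of points of `a`. -/
noncomputable def xp (a : Reg) : ℝ := sSup (Prod.fst '' a)
/-- `y⁻(a)`: infimum of second coordinates of points of `a`. -/
noncomputable def ym (a : Reg) : ℝ := sInf (Prod.snd '' a)
/-- `y⁺(a)`: supremum of second coordinates of points of `a`. -/
noncomputable def yp (a : Reg) : ℝ := sSup (Prod.snd '' a)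

/-- `I_x(a) = [x⁻(a), x⁺(a)]`. -/
noncomputable def Ix (a : Reg) : Set ℝ := Icc (xm a) (xp a)
/-- `I_y(a) = [y⁻(a), y⁺(a)]`. -/
noncomputable def Iy (a : Reg) : Set ℝ := Icc (ym a) (yp a)
/-- Minimum bounding rectangle `M(a) = I_x(a) × I_y(a)`. -/
noncomputable def MBR (a : Reg) : Reg := Ix a ×ˢ Iy a

/-- The nine tile names. -/
inductive Tile : Type
  | NW | N | NE | W | O | E | SW | S | SE
  deriving DecidableEq

/-- The nine tiles of a region `b`. -/
noncomputable def Tile.region : Tile → Reg → Reg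
  | .O,  b => Ix b ×ˢ Iy b
  | .N,  b => Ix b ×ˢ Ici (yp b)
  | .S,  b => Ix b ×ˢ Iic (ym b)
  | .E,  b => Ici (xp b) ×ˢ Iy b
  | .W,  b => Iic (xm b) ×ˢ Iy b
  | .NE, b => Ici (xp b) ×ˢ Ici (yp b)
  | .NW, b => Iic (xm b) ×ˢ Ici (yp b)
  | .SE, b => Ici (xp b) ×ˢ Iic (ym b)
  | .SW, b => Iic (xm b) ×ˢ Iic (ym b)

/-- The basic CDC constraint `a T b`: the set of tile names `χ` with
`interior a ∩ χ(b) ≠ ∅` is exactly `T`. -/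
def cdc (a : Reg) (T : Set Tile) (b : Reg) : Prop :=
  ∀ χ : Tile, (interior a ∩ χ.region b).Nonempty ↔ χ ∈ T

/-- A region: a nonempty bounded regular closed subset of the plane. -/
def IsRegion (a : Reg) : Prop :=
  a.Nonempty ∧ Bornology.IsBounded a ∧ a = closure (interior a)

/-- A connected region: a region whose interior is connected. -/
def IsConnRegion (a : Reg) : Prop :=
  IsRegion a ∧ IsConnected (interior a)

/-- An axis-parallel (nondegenerate, closed) rectangle. -/
def IsRect (a : Reg) : Prop :=
  ∃ x1 x2 y1 y2 : ℝ, x1 < x2 ∧ y1 < y2 ∧ a = Icc x1 x2 ×ˢ Icc y1 y2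

/- Basic IA relations on intervals given by their endpoint pairs. -/
def RAs  (I J : ℝ × ℝ) : Prop := I.1 = J.1 ∧ I.2 < J.2
def RAf  (I J : ℝ × ℝ) : Prop := J.1 < I.1 ∧ I.2 = J.2
def RAsi (I J : ℝ × ℝ) : Prop := RAs J I
def RAfi (I J : ℝ × ℝ) : Prop := RAf J I
def RAo  (I J : ℝ × ℝ) : Prop := I.1 < J.1 ∧ J.1 < I.2 ∧ I.2 < J.2
def RAeq (I J : ℝ × ℝ) : Prop := I = J

/-- `(a, b) ∈ α⊗β`: `I_x(a) α I_x(b)` and `I_y(a) β I_y(b)`. -/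
def RA (α β : ℝ × ℝ → ℝ × ℝ → Prop) (a b : Reg) : Prop :=
  α (xm a, xp a) (xm b, xp b) ∧ β (ym a, yp a) (ym b, yp b)

/-- `a` is vertical w.r.t. `b`: `(a, b) ∈ s⊗fi`. -/
def Vert (a b : Reg) : Prop := RA RAs RAfi a b
/-- `a` is horizontal w.r.t. `b`: `(a, b) ∈ si⊗f`. -/
def Horiz (a b : Reg) : Prop := RA RAsi RAf a b
/-- The upper-left-corner relation `⌜(a,b)`. -/
def ULC (a b : Reg) : Prop := Vert a b ∨ Horiz a b

/-- The network `N_⌜(u, v; w₁, w₂)`. -/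
def NetULC (u v w1 w2 : Reg) : Prop :=
  cdc u {Tile.O} w1 ∧ cdc w1 {Tile.E, Tile.SE, Tile.S, Tile.O} u ∧
  cdc v {Tile.O} w1 ∧ cdc w1 {Tile.E, Tile.SE, Tile.S} v ∧
  cdc v {Tile.O} w2 ∧ cdc w2 {Tile.E, Tile.SE, Tile.S, Tile.O} v ∧
  cdc u {Tile.O} w2 ∧ cdc w2 {Tile.E, Tile.SE, Tile.S} u

/-- The network `N_∥(u, v; w)`. -/
def NetPar (u v w : Reg) : Prop :=
  cdc u {Tile.E} w ∧ cdc w {Tile.E} v ∧ cdc v {Tile.W} u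

/-- The network `N_p` for a propositional variable `p`, over the regions
`u_p, u_{¬p}, f_p, f_{¬p}, f_p⁰` and six auxiliary regions. -/
def NetP (up unp fp fnp fp0 a1 a2 b1 b2 c1 c2 : Reg) : Prop :=
  cdc up {Tile.O} fnp ∧ cdc fp {Tile.O} unp ∧
  NetULC up fp a1 a2 ∧ NetULC unp fnp b1 b2 ∧ NetULC up unp c1 c2 ∧
  cdc fp {Tile.O} fnp ∧ cdc fnp {Tile.E, Tile.SE, Tile.S, Tile.O} fp ∧
  cdc unp {Tile.O} fp0 ∧ cdc fp0 {Tile.E, Tile.SE, Tile.S, Tile.O} unp ∧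
  cdc fnp {Tile.O} fp0 ∧ cdc fp0 {Tile.E, Tile.SE, Tile.S, Tile.O} fnp

/-- The reference network `N_ref`. -/
def NetRef (wref fref fnref f0ref : Reg) : Prop :=
  cdc wref {Tile.O} fref ∧ cdc fref {Tile.O} fnref ∧ cdc fnref {Tile.O} f0ref ∧
  cdc f0ref {Tile.S, Tile.O} fnref ∧ cdc fnref {Tile.S, Tile.O} fref ∧
  cdc fref {Tile.S, Tile.O} wref

/-- An assignment of regions to all variables of the network `N_V`
(for propositional variables `p_1, …, p_n`):
`u i, un i, f i, fn i, f0 i` are `u_i, u_{¬i}, f_i, f_{¬i}, f_i⁰`;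
`a1 i, a2 i, b1 i, b2 i, c1 i, c2 i` are the six auxiliary regions of `N_{p_i}`;
`wref, fref, fnref, f0ref` are the reference regions; and
`pf i, pfn i, pf0 i` are the auxiliary regions of the parallel networks
linking `f_i` (resp. `f_{¬i}`, `f_i⁰`) to its predecessor. -/
structure VAssign (n : ℕ) where
  (u un f fn f0 : Fin n → Reg)
  (a1 a2 b1 b2 c1 c2 : Fin n → Reg)
  (wref fref fnref f0ref : Reg)
  (pf pfn pf0 : Fin n → Reg)

/-- The predecessor in a chain: `g (i-1)` if `i > 0`, else the default `d`. -/
def prevOr {n : ℕ} (g : Fin n → Reg) (d : Reg) (i : Fin n) : Reg :=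
  if 0 < i.val then g ⟨i.val - 1, lt_of_le_of_lt (Nat.sub_le _ _) i.isLt⟩ else d

/-- All the constraints of the network `N_V` hold. -/
def VAssign.Holds {n : ℕ} (S : VAssign n) : Prop :=
  (∀ i, NetP (S.u i) (S.un i) (S.f i) (S.fn i) (S.f0 i)
      (S.a1 i) (S.a2 i) (S.b1 i) (S.b2 i) (S.c1 i) (S.c2 i)) ∧
  NetRef S.wref S.fref S.fnref S.f0ref ∧
  (∀ i, NetPar (S.f i) (prevOr S.f S.fref i) (S.pf i)) ∧
  (∀ i, NetPar (S.fn i) (prevOr S.fn S.fnref i) (S.pfn i)) ∧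
  (∀ i, NetPar (S.f0 i) (prevOr S.f0 S.f0ref i) (S.pf0 i))

/-- Every region of the assignment is a connected region. -/
def VAssign.AllConn {n : ℕ} (S : VAssign n) : Prop :=
  (∀ i, IsConnRegion (S.u i) ∧ IsConnRegion (S.un i) ∧ IsConnRegion (S.f i) ∧
     IsConnRegion (S.fn i) ∧ IsConnRegion (S.f0 i) ∧ IsConnRegion (S.a1 i) ∧
     IsConnRegion (S.a2 i) ∧ IsConnRegion (S.b1 i) ∧ IsConnRegion (S.b2 i) ∧
     IsConnRegion (S.c1 i) ∧ IsConnRegion (S.c2 i) ∧ IsConnRegion (S.pf i) ∧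
     IsConnRegion (S.pfn i) ∧ IsConnRegion (S.pf0 i)) ∧
  IsConnRegion S.wref ∧ IsConnRegion S.fref ∧ IsConnRegion S.fnref ∧
  IsConnRegion S.f0ref

/-- Every region of the assignment is an axis-parallel rectangle. -/
def VAssign.AllRect {n : ℕ} (S : VAssign n) : Prop :=
  (∀ i, IsRect (S.u i) ∧ IsRect (S.un i) ∧ IsRect (S.f i) ∧
     IsRect (S.fn i) ∧ IsRect (S.f0 i) ∧ IsRect (S.a1 i) ∧
     IsRect (S.a2 i) ∧ IsRect (S.b1 i) ∧ IsRect (S.b2 i) ∧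
     IsRect (S.c1 i) ∧ IsRect (S.c2 i) ∧ IsRect (S.pf i) ∧
     IsRect (S.pfn i) ∧ IsRect (S.pf0 i)) ∧
  IsRect S.wref ∧ IsRect S.fref ∧ IsRect S.fnref ∧ IsRect S.f0ref

/-- A clause `c = p_r* ∨ p_s* ∨ p_t*` with `r < s < t`; the Booleans record
whether each literal is positive (`true`) or negative (`false`). -/
structure Clause (n : ℕ) where
  r : Fin n
  s : Fin n
  t : Fin n
  hrs : r < s
  hst : s < t
  sr : Bool
  ss : Bool
  st : Bool

/-- An assignment of regions to the fresh variables of a clause network `N_c`: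
`vc, w₀, w_rs, w_st, w₁` plus the two auxiliary regions `pa, pb` of the
parallel networks for `w₀` and `w₁`. -/
structure CAssign where
  vc : Reg
  w0 : Reg
  wrs : Reg
  wst : Reg
  w1 : Reg
  pa : Reg
  pb : Reg

/-- `u_i*`: `u_i` for a positive literal and `u_{¬i}` for a negative one. -/
def ustar {n : ℕ} (S : VAssign n) (i : Fin n) (sign : Bool) : Reg :=
  if sign then S.u i else S.un i

/-- The frame of literal `p_i*`: `f_i` for a positive literal, `f_{¬i}` otherwise. -/
def fstar {n : ℕ} (S : VAssign n) (i : Fin n) (sign : Bool) : Reg :=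
  if sign then S.f i else S.fn i

/-- All the constraints of the clause network `N_c` (including those of `N_V`). -/
def NetC {n : ℕ} (S : VAssign n) (c : Clause n) (C : CAssign) : Prop :=
  S.Holds ∧
  NetPar C.w0 S.wref C.pa ∧ NetPar C.w1 S.wref C.pb ∧
  cdc C.w0 {Tile.W, Tile.O} (S.f c.r) ∧
  cdc (S.f c.r) {Tile.E, Tile.SE, Tile.S, Tile.O} C.w0 ∧
  (if c.sr then
    cdc (S.f c.r) {Tile.W, Tile.O} C.wrs ∧ cdc C.wrs {Tile.E, Tile.O} (S.f c.r)
   else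
    cdc (S.fn c.r) {Tile.S, Tile.SW, Tile.W, Tile.O} C.wrs ∧
    cdc C.wrs {Tile.E, Tile.O} (S.fn c.r)) ∧
  cdc C.wrs {Tile.W, Tile.O} (S.f c.s) ∧ cdc (S.f c.s) {Tile.E, Tile.O} C.wrs ∧
  (if c.ss then
    cdc (S.f c.s) {Tile.W, Tile.O} C.wst ∧ cdc C.wst {Tile.E, Tile.O} (S.f c.s)
   else
    cdc (S.fn c.s) {Tile.S, Tile.SW, Tile.W, Tile.O} C.wst ∧
    cdc C.wst {Tile.E, Tile.O} (S.fn c.s)) ∧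
  cdc C.wst {Tile.W, Tile.O} (S.f c.t) ∧ cdc (S.f c.t) {Tile.E, Tile.O} C.wst ∧
  (if c.st then
    cdc (S.f c.t) {Tile.S, Tile.SW, Tile.W, Tile.O} C.w1 ∧
    cdc C.w1 {Tile.E, Tile.O} (S.f c.t)
   else
    cdc (S.fn c.t) {Tile.S, Tile.SW, Tile.W, Tile.O} C.w1 ∧
    cdc C.w1 {Tile.E, Tile.O} (S.fn c.t)) ∧
  cdc C.w0 {Tile.O} C.vc ∧
  cdc (ustar S c.r c.sr) {Tile.O} C.vc ∧
  cdc C.wrs {Tile.O} C.vc ∧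
  cdc (ustar S c.s c.ss) {Tile.O} C.vc ∧
  cdc C.wst {Tile.O} C.vc ∧
  cdc (ustar S c.t c.st) {Tile.O} C.vc ∧
  cdc C.w1 {Tile.O} C.vc ∧
  cdc C.vc {Tile.E, Tile.SE, Tile.S} C.w0 ∧
  cdc C.vc {Tile.S, Tile.SW, Tile.W} C.w1 ∧
  cdc C.vc {Tile.E, Tile.SE, Tile.S, Tile.SW, Tile.W} (ustar S c.r c.sr) ∧
  cdc C.vc {Tile.E, Tile.SE, Tile.S, Tile.SW, Tile.W} C.wrs ∧
  cdc C.vc {Tile.E, Tile.SE, Tile.S, Tile.SW, Tile.W} (ustar S c.s c.ss) ∧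
  cdc C.vc {Tile.E, Tile.SE, Tile.S, Tile.SW, Tile.W} C.wst ∧
  cdc C.vc {Tile.E, Tile.SE, Tile.S, Tile.SW, Tile.W} (ustar S c.t c.st)

/-- Every clause region is a connected region. -/
def CAssign.AllConn (C : CAssign) : Prop :=
  IsConnRegion C.vc ∧ IsConnRegion C.w0 ∧ IsConnRegion C.wrs ∧
  IsConnRegion C.wst ∧ IsConnRegion C.w1 ∧ IsConnRegion C.pa ∧ IsConnRegion C.pb

/-- Every clause region except `v_c` is an axis-parallel rectangle. -/
def CAssign.RectExceptVc (C : CAssign) : Prop :=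
  IsRect C.w0 ∧ IsRect C.wrs ∧ IsRect C.wst ∧ IsRect C.w1 ∧
  IsRect C.pa ∧ IsRect C.pb

/-! ### Bounding boxes and tiles of connected regions -/

lemma IsConnRegion.mem_box {a : Reg} (ha : IsConnRegion a) {p : ℝ × ℝ} (hp : p ∈ interior a) :
    xm a < p.1 ∧ p.1 < xp a ∧ ym a < p.2 ∧ p.2 < yp a := by
  have hb := ha.1.2.1
  have o1 : IsOpen (Prod.fst '' interior a) := isOpenMap_fst _ isOpen_interior
  have o2 : IsOpen (Prod.snd '' interior a) := isOpenMap_snd _ isOpen_interior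
  have b1 : Bornology.IsBounded (Prod.fst '' a) := hb.image_fst
  have b2 : Bornology.IsBounded (Prod.snd '' a) := hb.image_snd
  have m1 : p.1 ∈ Prod.fst '' interior a := mem_image_of_mem _ hp
  have m2 : p.2 ∈ Prod.snd '' interior a := mem_image_of_mem _ hp
  have s1 := image_mono (f := Prod.fst) (interior_subset (s := a))
  have s2 := image_mono (f := Prod.snd) (interior_subset (s := a))
  refine ⟨?_, ?_, ?_, ?_⟩
  · have h : Prod.fst '' interior a ⊆ Ici (xm a) := fun q hq => csInf_le b1.bddBelow (s1 hq)
    have := interior_maximal h o1 m1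
    simpa using this
  · have h : Prod.fst '' interior a ⊆ Iic (xp a) := fun q hq => le_csSup b1.bddAbove (s1 hq)
    have := interior_maximal h o1 m1
    simpa using this
  · have h : Prod.snd '' interior a ⊆ Ici (ym a) := fun q hq => csInf_le b2.bddBelow (s2 hq)
    have := interior_maximal h o2 m2
    simpa using this
  · have h : Prod.snd '' interior a ⊆ Iic (yp a) := fun q hq => le_csSup b2.bddAbove (s2 hq)
    have := interior_maximal h o2 m2
    simpa using this

/-- A region is the closure of its interior, so an open set meeting it meets its interior. -/
lemma IsConnRegion.exists_interior {a : Reg} (ha : IsConnRegion a) {V : Set (ℝ × ℝ)}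
    (hV : IsOpen V) {q : ℝ × ℝ} (hq : q ∈ a) (hqV : q ∈ V) : ∃ p ∈ interior a, p ∈ V := by
  have h := ha.1.2.2
  rw [h] at hq
  obtain ⟨p, hpV, hp⟩ := mem_closure_iff.1 hq V hV hqV
  exact ⟨p, hp, hpV⟩

lemma IsConnRegion.le_xm {a : Reg} (ha : IsConnRegion a) {c : ℝ}
    (h : ∀ p ∈ interior a, c ≤ p.1) : c ≤ xm a := by
  by_contra! hc
  obtain ⟨_, ⟨q, hq, rfl⟩, hqc⟩ := exists_lt_of_csInf_lt (ha.1.1.image _) hc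
  obtain ⟨p, hp, hpc⟩ := ha.exists_interior (isOpen_lt continuous_fst continuous_const) hq hqc
  exact absurd (h p hp) (not_le.2 hpc)

lemma IsConnRegion.xp_le {a : Reg} (ha : IsConnRegion a) {c : ℝ}
    (h : ∀ p ∈ interior a, p.1 ≤ c) : xp a ≤ c := by
  by_contra! hc
  obtain ⟨_, ⟨q, hq, rfl⟩, hqc⟩ := exists_lt_of_lt_csSup (ha.1.1.image _) hc
  obtain ⟨p, hp, hpc⟩ := ha.exists_interior (isOpen_lt continuous_const continuous_fst) hq hqc
  exact absurd (h p hp) (not_le.2 hpc)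

lemma IsConnRegion.le_ym {a : Reg} (ha : IsConnRegion a) {c : ℝ}
    (h : ∀ p ∈ interior a, c ≤ p.2) : c ≤ ym a := by
  by_contra! hc
  obtain ⟨_, ⟨q, hq, rfl⟩, hqc⟩ := exists_lt_of_csInf_lt (ha.1.1.image _) hc
  obtain ⟨p, hp, hpc⟩ := ha.exists_interior (isOpen_lt continuous_snd continuous_const) hq hqc
  exact absurd (h p hp) (not_le.2 hpc)

lemma IsConnRegion.yp_le {a : Reg} (ha : IsConnRegion a) {c : ℝ}
    (h : ∀ p ∈ interior a, p.2 ≤ c) : yp a ≤ c := by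
  by_contra! hc
  obtain ⟨_, ⟨q, hq, rfl⟩, hqc⟩ := exists_lt_of_lt_csSup (ha.1.1.image _) hc
  obtain ⟨p, hp, hpc⟩ := ha.exists_interior (isOpen_lt continuous_const continuous_snd) hq hqc
  exact absurd (h p hp) (not_le.2 hpc)

section cdc
variable {a b : Reg} {T : Set Tile}

lemma cdc.notMem (h : cdc a T b) {χ : Tile} (hχ : χ ∉ T) {p : ℝ × ℝ} (hp : p ∈ interior a) :
    p ∉ χ.region b := fun hp' => hχ ((h χ).1 ⟨p, hp, hp'⟩)

lemma cdc.xm_le (h : cdc a T b) (ha : IsConnRegion a)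
    (h1 : Tile.W ∉ T) (h2 : Tile.NW ∉ T) (h3 : Tile.SW ∉ T) : xm b ≤ xm a := by
  refine ha.le_xm fun p hp => ?_
  by_contra! hlt
  have k1 := h.notMem h1 hp
  have k2 := h.notMem h2 hp
  have k3 := h.notMem h3 hp
  simp only [Tile.region, Iy, mem_prod, mem_Iic, mem_Icc, mem_Ici, hlt.le, true_and] at k1 k2 k3
  grind

lemma cdc.xp_le (h : cdc a T b) (ha : IsConnRegion a)
    (h1 : Tile.E ∉ T) (h2 : Tile.NE ∉ T) (h3 : Tile.SE ∉ T) : xp a ≤ xp b := by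
  refine ha.xp_le fun p hp => ?_
  by_contra! hlt
  have k1 := h.notMem h1 hp
  have k2 := h.notMem h2 hp
  have k3 := h.notMem h3 hp
  simp only [Tile.region, Iy, mem_prod, mem_Iic, mem_Icc, mem_Ici, hlt.le, true_and] at k1 k2 k3
  grind

lemma cdc.ym_le (h : cdc a T b) (ha : IsConnRegion a)
    (h1 : Tile.S ∉ T) (h2 : Tile.SW ∉ T) (h3 : Tile.SE ∉ T) : ym b ≤ ym a := by
  refine ha.le_ym fun p hp => ?_
  by_contra! hlt
  have k1 := h.notMem h1 hp
  have k2 := h.notMem h2 hp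
  have k3 := h.notMem h3 hp
  simp only [Tile.region, Ix, mem_prod, mem_Iic, mem_Icc, mem_Ici, hlt.le, and_true] at k1 k2 k3
  grind

lemma cdc.yp_le (h : cdc a T b) (ha : IsConnRegion a)
    (h1 : Tile.N ∉ T) (h2 : Tile.NW ∉ T) (h3 : Tile.NE ∉ T) : yp a ≤ yp b := by
  refine ha.yp_le fun p hp => ?_
  by_contra! hlt
  have k1 := h.notMem h1 hp
  have k2 := h.notMem h2 hp
  have k3 := h.notMem h3 hp
  simp only [Tile.region, Ix, mem_prod, mem_Iic, mem_Icc, mem_Ici, hlt.le, and_true] at k1 k2 k3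
  grind

/-- If `a O b`, the bounding box of `a` lies in that of `b`. -/
lemma cdc.box_le (h : cdc a {Tile.O} b) (ha : IsConnRegion a) :
    xm b ≤ xm a ∧ xp a ≤ xp b ∧ ym b ≤ ym a ∧ yp a ≤ yp b :=
  ⟨h.xm_le ha (by simp) (by simp) (by simp), h.xp_le ha (by simp) (by simp) (by simp),
    h.ym_le ha (by simp) (by simp) (by simp), h.yp_le ha (by simp) (by simp) (by simp)⟩

lemma cdc.O_pt (h : cdc a T b) (hT : Tile.O ∈ T) : ∃ p ∈ interior a,
    xm b ≤ p.1 ∧ p.1 ≤ xp b ∧ ym b ≤ p.2 ∧ p.2 ≤ yp b := by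
  obtain ⟨p, hp, hp'⟩ := (h Tile.O).2 hT
  simp only [Tile.region, Ix, Iy, mem_prod, mem_Icc] at hp'
  exact ⟨p, hp, hp'.1.1, hp'.1.2, hp'.2.1, hp'.2.2⟩

/-- Two regions one of which meets the tile `O` of the other have overlapping `x`-extents. -/
lemma cdc.O_overlap (h : cdc a T b) (ha : IsConnRegion a) (hT : Tile.O ∈ T) :
    xm a < xp b ∧ xm b < xp a := by
  obtain ⟨p, hp, h1, h2, -, -⟩ := h.O_pt hT
  obtain ⟨k1, k2, -, -⟩ := ha.mem_box hp
  exact ⟨by linarith, by linarith⟩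

lemma cdc.notO (h : cdc a T b) (hT : Tile.O ∉ T) {p : ℝ × ℝ} (hp : p ∈ interior a)
    (h1 : xm b ≤ p.1) (h2 : p.1 ≤ xp b) (h3 : ym b ≤ p.2) (h4 : p.2 ≤ yp b) : False :=
  h.notMem hT hp (by simp only [Tile.region, Ix, Iy, mem_prod, mem_Icc]; exact ⟨⟨h1, h2⟩, h3, h4⟩)

end cdc

/-! ### Necessity: a solution makes the clause true -/

/-- The network `N_⌜` forces the upper-left-corner relation. -/
lemma NetULC.ulc {u v w1 w2 : Reg} (h : NetULC u v w1 w2) (hu : IsConnRegion u)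
    (hv : IsConnRegion v) (h1 : IsConnRegion w1) :
    xm u = xm v ∧ yp u = yp v ∧
      ((xp u < xp v ∧ ym u < ym v) ∨ (xp v < xp u ∧ ym v < ym u)) := by
  obtain ⟨a1, a2, a3, a4, a5, a6, a7, a8⟩ := h
  obtain ⟨a1x, a1p, a1y, a1t⟩ := a1.box_le hu
  obtain ⟨a3x, a3p, a3y, a3t⟩ := a3.box_le hv
  have b1 := a2.xm_le h1 (by simp) (by simp) (by simp)
  have b2 := a2.yp_le h1 (by simp) (by simp) (by simp)
  have b3 := a4.xm_le h1 (by simp) (by simp) (by simp)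
  have b4 := a4.yp_le h1 (by simp) (by simp) (by simp)
  have hx : xm u = xm v := by linarith
  have hy : yp u = yp v := by linarith
  obtain ⟨p, hp, p1, p2, p3, p4⟩ := a2.O_pt (by simp)
  obtain ⟨q, hq, q1, q2, q3, q4⟩ := a6.O_pt (by simp)
  have hpv := a4.notO (by simp) hp (by linarith)
  have hqu := a8.notO (by simp) hq (by linarith)
  refine ⟨hx, hy, ?_⟩
  have c1 : xp v < xp u ∨ ym u < ym v := by
    by_contra! hc
    exact hpv (by linarith) (by linarith) (by linarith)
  have c2 : xp u < xp v ∨ ym v < ym u := by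
    by_contra! hc
    exact hqu (by linarith) (by linarith) (by linarith)
  rcases c1 with c1 | c1 <;> rcases c2 with c2 | c2
  · linarith
  · exact Or.inr ⟨c1, c2⟩
  · exact Or.inl ⟨c2, c1⟩
  · linarith

/-- In a solution of `N_p`, both `u_p` and `u_{¬p}` start at the left edge of `f_p`, and the one
belonging to the false literal sticks out of its frame on the right. -/
lemma NetP.frame {u un f fn f0 a1 a2 b1 b2 c1 c2 : Reg}
    (h : NetP u un f fn f0 a1 a2 b1 b2 c1 c2)
    (hu : IsConnRegion u) (hun : IsConnRegion un) (hf : IsConnRegion f) (hfn : IsConnRegion fn)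
    (ha1 : IsConnRegion a1) (hb1 : IsConnRegion b1) (hc1 : IsConnRegion c1) :
    xm u = xm f ∧ xm un = xm f ∧ (¬ Vert u f → xp f < xp u) ∧ (Vert u f → xp fn < xp un) := by
  obtain ⟨k1, k2, k3, k4, k5, -⟩ := h
  obtain ⟨e1, e2, e3⟩ := k3.ulc hu hf ha1
  obtain ⟨g1, g2, g3⟩ := k4.ulc hun hfn hb1
  obtain ⟨i1, i2, i3⟩ := k5.ulc hu hun hc1
  obtain ⟨j1, j2, j3, j4⟩ := k1.box_le hu
  obtain ⟨l1, l2, l3, l4⟩ := k2.box_le hf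
  refine ⟨e1, by linarith, fun hv => ?_, fun hv => ?_⟩
  · rcases e3 with e3 | e3
    · exact absurd ⟨⟨e1, e3.1⟩, e3.2, e2.symm⟩ hv
    · exact e3.1
  · obtain ⟨⟨-, v1⟩, v2, -⟩ := hv
    simp only at v1 v2
    rcases g3 with g3 | g3
    · rcases i3 with i3 | i3 <;> linarith
    · exact g3.1

/-- If no gap is left between consecutive boxes of `X_c`, they cover the top strip of the bounding
box of `v_c`, which is incompatible with `y⁺(v_c)` being their common top. -/
lemma no_gap {v w0 ur wr us ws ut w1 : Reg} (hv : IsConnRegion v)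
    (h0 : IsConnRegion w0) (hr : IsConnRegion ur) (hwr : IsConnRegion wr) (hs : IsConnRegion us)
    (hws : IsConnRegion ws) (ht : IsConnRegion ut) (h1 : IsConnRegion w1)
    (o0 : cdc w0 {Tile.O} v) (or : cdc ur {Tile.O} v) (owr : cdc wr {Tile.O} v)
    (os : cdc us {Tile.O} v) (ows : cdc ws {Tile.O} v) (ot : cdc ut {Tile.O} v)
    (o1 : cdc w1 {Tile.O} v)
    (v0 : cdc v {Tile.E, Tile.SE, Tile.S} w0) (v1 : cdc v {Tile.S, Tile.SW, Tile.W} w1)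
    (vr : cdc v {Tile.E, Tile.SE, Tile.S, Tile.SW, Tile.W} ur)
    (vwr : cdc v {Tile.E, Tile.SE, Tile.S, Tile.SW, Tile.W} wr)
    (vs : cdc v {Tile.E, Tile.SE, Tile.S, Tile.SW, Tile.W} us)
    (vws : cdc v {Tile.E, Tile.SE, Tile.S, Tile.SW, Tile.W} ws)
    (vt : cdc v {Tile.E, Tile.SE, Tile.S, Tile.SW, Tile.W} ut)
    (g1 : xm ur ≤ xp w0) (g2 : xm wr ≤ xp ur) (g3 : xm us ≤ xp wr) (g4 : xm ws ≤ xp us)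
    (g5 : xm ut ≤ xp ws) (g6 : xm w1 ≤ xp ut) : False := by
  have t : ∀ {T : Set Tile} {x : Reg}, IsConnRegion x → cdc x {Tile.O} v → cdc v T x →
      Tile.N ∉ T → Tile.NW ∉ T → Tile.NE ∉ T → yp x = yp v ∧ ym x < yp v := by
    intro T x hx ho hvx k1 k2 k3
    have h2 := ho.box_le hx
    have h3 := hvx.yp_le hv k1 k2 k3
    obtain ⟨q, hq⟩ := hx.2.nonempty
    have h4 := hx.mem_box hq
    exact ⟨by linarith, by linarith⟩
  obtain ⟨y0, z0⟩ := t h0 o0 v0 (by simp) (by simp) (by simp)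
  obtain ⟨yr, zr⟩ := t hr or vr (by simp) (by simp) (by simp)
  obtain ⟨ywr, zwr⟩ := t hwr owr vwr (by simp) (by simp) (by simp)
  obtain ⟨ys, zs⟩ := t hs os vs (by simp) (by simp) (by simp)
  obtain ⟨yws, zws⟩ := t hws ows vws (by simp) (by simp) (by simp)
  obtain ⟨yt, zt⟩ := t ht ot vt (by simp) (by simp) (by simp)
  obtain ⟨y1, z1⟩ := t h1 o1 v1 (by simp) (by simp) (by simp)
  have xl := v0.xm_le hv (by simp) (by simp) (by simp)
  have xr := v1.xp_le hv (by simp) (by simp) (by simp)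
  -- an interior point of `v` above the bottoms of all seven boxes
  set c := max (ym w0) (max (ym ur) (max (ym wr) (max (ym us) (max (ym ws)
    (max (ym ut) (ym w1)))))) with hc
  have hcv : c < yp v := by simp only [hc, max_lt_iff]; exact ⟨z0, zr, zwr, zs, zws, zt, z1⟩
  have : ∃ p ∈ interior v, c < p.2 := by
    by_contra! hcon
    exact absurd (hv.yp_le hcon) (not_le.2 hcv)
  obtain ⟨p, hp, hpc⟩ := this
  simp only [hc, max_lt_iff] at hpc
  obtain ⟨q0, qr, qwr, qs, qws, qt, q1⟩ := hpc
  obtain ⟨p1, p2, p3, p4⟩ := hv.mem_box hp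
  have n0 := v0.notO (by simp) hp (by linarith)
  have nr := vr.notO (by simp) hp
  have nwr := vwr.notO (by simp) hp
  have ns := vs.notO (by simp) hp
  have nws := vws.notO (by simp) hp
  have nt := vt.notO (by simp) hp
  have n1 := v1.notO (by simp) hp
  have r0 : xp w0 < p.1 := by by_contra! k; exact n0 k q0.le (by linarith)
  have rr : xp ur < p.1 := by by_contra! k; exact nr (by linarith) k qr.le (by linarith)
  have rwr : xp wr < p.1 := by by_contra! k; exact nwr (by linarith) k qwr.le (by linarith)
  have rs : xp us < p.1 := by by_contra! k; exact ns (by linarith) k qs.le (by linarith)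
  have rws : xp ws < p.1 := by by_contra! k; exact nws (by linarith) k qws.le (by linarith)
  have rt : xp ut < p.1 := by by_contra! k; exact nt (by linarith) k qt.le (by linarith)
  exact n1 (by linarith) (by linarith) q1.le (by linarith)

lemma ustar_conn {n : ℕ} {S : VAssign n} (hS : S.AllConn) (i : Fin n) (b : Bool) :
    IsConnRegion (ustar S i b) := by
  have := hS.1 i
  cases b <;> simp only [ustar, if_true, Bool.false_eq_true, if_false] <;> tauto

/-- The region of a false literal covers the whole width of its frame. -/
lemma ustar_false {n : ℕ} {S : VAssign n} (hS : S.AllConn) (hH : S.Holds) (i : Fin n)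
    (b t : Bool) (hV : Vert (S.u i) (S.f i) ↔ t = true) (ht : t ≠ b) :
    xm (ustar S i b) = xm (S.f i) ∧ xp (fstar S i b) < xp (ustar S i b) := by
  obtain ⟨h1, h2, h3, h4, -, h6, -, h8, -, h10, -⟩ := hS.1 i
  obtain ⟨k1, k2, k3, k4⟩ := (hH.1 i).frame h1 h2 h3 h4 h6 h8 h10
  cases b <;> cases t <;> simp_all [ustar, fstar]

theorem clause_of_solution {n : ℕ} (c : Clause n) (π : Fin n → Bool) (S : VAssign n)
    (C : CAssign) (hS : S.AllConn) (hC : C.AllConn) (hN : NetC S c C)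
    (hV : ∀ i ∈ ({c.r, c.s, c.t} : Set (Fin n)), (Vert (S.u i) (S.f i) ↔ π i = true)) :
    π c.r = c.sr ∨ π c.s = c.ss ∨ π c.t = c.st := by
  by_contra! hcon
  obtain ⟨nr, ns, nt⟩ := hcon
  obtain ⟨hH, -, -, m1, -, m2, m3, -, m4, m5, -, m6, o0, or, owr, os, ows, ot, o1,
    v0, v1, vr, vwr, vs, vws, vt⟩ := hN
  obtain ⟨hv, h0, hwr, hws, h1, -, -⟩ := hC
  obtain ⟨xr, er⟩ := ustar_false hS hH c.r c.sr _ (hV _ (by simp)) nr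
  obtain ⟨xs, es⟩ := ustar_false hS hH c.s c.ss _ (hV _ (by simp)) ns
  obtain ⟨xt, et⟩ := ustar_false hS hH c.t c.st _ (hV _ (by simp)) nt
  have g2 : xm C.wrs < xp (fstar S c.r c.sr) := by
    cases hb : c.sr <;> simp only [hb, fstar, if_true, Bool.false_eq_true, if_false] at m2 ⊢ <;>
      exact (m2.2.O_overlap hwr (by simp)).1
  have g4 : xm C.wst < xp (fstar S c.s c.ss) := by
    cases hb : c.ss <;> simp only [hb, fstar, if_true, Bool.false_eq_true, if_false] at m4 ⊢ <;>
      exact (m4.2.O_overlap hws (by simp)).1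
  have g6 : xm C.w1 < xp (fstar S c.t c.st) := by
    cases hb : c.st <;> simp only [hb, fstar, if_true, Bool.false_eq_true, if_false] at m6 ⊢ <;>
      exact (m6.2.O_overlap h1 (by simp)).1
  have g1 := (m1.O_overlap h0 (by simp)).2
  have g3 := (m3.O_overlap hwr (by simp)).2
  have g5 := (m5.O_overlap hws (by simp)).2
  exact no_gap hv h0 (ustar_conn hS _ _) hwr (ustar_conn hS _ _) hws (ustar_conn hS _ _) h1
    o0 or owr os ows ot o1 v0 v1 vr vwr vs vws vt (by linarith) (by linarith) (by linarith)
    (by linarith) (by linarith) (by linarith)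

/-! ### Hanging shapes -/

/-- The open box `(l, r) × (-d, 0)` with finitely many boxes removed. An entry `(l', r', d')` of `L`
stands for the box `[l', r'] × [-d', ∞)`. -/
def hang (l r d : ℝ) (L : List (ℝ × ℝ × ℝ)) : Reg :=
  {p | l < p.1 ∧ p.1 < r ∧ -d < p.2 ∧ p.2 < 0 ∧
    ∀ b ∈ L, ¬ (b.1 ≤ p.1 ∧ p.1 ≤ b.2.1 ∧ -b.2.2 ≤ p.2)}

/-- The closed set spanned by `hang l r d L`. -/
def hreg (l r d : ℝ) (L : List (ℝ × ℝ × ℝ)) : Reg := closure (hang l r d L)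

/-- `b` is a connected region with bounding box `[l, r] × [-d, 0]`. -/
structure HasBox (b : Reg) (l r d : ℝ) : Prop where
  conn : IsConnRegion b
  xm : xm b = l
  xp : xp b = r
  ym : ym b = -d
  yp : yp b = 0
  lr : l < r
  dpos : 0 < d

lemma isOpen_hang (l r d : ℝ) (L : List (ℝ × ℝ × ℝ)) : IsOpen (hang l r d L) := by
  have : hang l r d L = (Ioo l r ×ˢ Ioo (-d) 0) ∩
      ⋂ b ∈ L.toFinset, ((Icc b.1 b.2.1 ×ˢ Ici (-b.2.2))ᶜ : Set (ℝ × ℝ)) := by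
    ext p
    simp only [hang, mem_ofPred_eq, mem_inter_iff, mem_prod, mem_Ioo, mem_iInter, List.mem_toFinset,
      mem_compl_iff, mem_Icc, mem_Ici]
    grind
  rw [this]
  refine (isOpen_Ioo.prod isOpen_Ioo).inter (isOpen_biInter_finset fun b _ => ?_)
  exact (isClosed_Icc.prod isClosed_Ici).isOpen_compl

/-- Every point of a hanging shape can be joined to the free strip at the bottom by a vertical
segment, so the shape is connected. -/
lemma isPreconnected_hang {l r d m : ℝ} {L : List (ℝ × ℝ × ℝ)} (hm : ∀ b ∈ L, b.2.2 ≤ m)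
    (hmd : m < d) (h0 : 0 ≤ m) : IsPreconnected (hang l r d L) := by
  have hB : IsPreconnected (Ioo l r ×ˢ Ioo (-d) (-m)) := isPreconnected_Ioo.prod isPreconnected_Ioo
  have hBs : Ioo l r ×ˢ Ioo (-d) (-m) ⊆ hang l r d L := by
    rintro ⟨x, y⟩ ⟨⟨h1, h2⟩, h3, h4⟩
    refine ⟨h1, h2, h3, by simp only at *; linarith, fun b hb hc => ?_⟩
    have := hm b hb
    simp only at *; linarith
  refine isPreconnected_of_forall ((l + r) / 2, -((m + d) / 2)) fun p hp => ?_
  obtain ⟨p1, p2, p3, p4, p5⟩ := hp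
  -- the vertical segment from the bottom strip up to `p`
  refine ⟨Ioo l r ×ˢ Ioo (-d) (-m) ∪ {p.1} ×ˢ Ioc (-d) p.2, union_subset hBs ?_, Or.inl ?_,
    Or.inr ⟨rfl, p3, le_rfl⟩, ?_⟩
  · rintro ⟨x, y⟩ ⟨h1, h3, h4⟩
    simp only [mem_singleton_iff] at h1 h3 h4
    subst h1
    refine ⟨p1, p2, h3, by simp only; linarith, fun b hb hc => p5 b hb ⟨hc.1, hc.2.1, ?_⟩⟩
    have := hc.2.2
    simp only at this
    linarith
  · exact ⟨⟨by simp only; linarith, by simp only; linarith⟩,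
      by simp only; linarith, by simp only; linarith⟩
  · set z := min p.2 (-((m + d) / 2))
    have z1 : z ≤ p.2 := min_le_left _ _
    have z2 : z ≤ -((m + d) / 2) := min_le_right _ _
    have z3 : -d < z := lt_min p3 (by linarith)
    exact hB.union (p.1, z) ⟨⟨p1, p2⟩, z3, by simp only; linarith⟩ ⟨rfl, z3, z1⟩
      (isPreconnected_singleton.prod isPreconnected_Ioc)

lemma sInf_of_near {s : Set ℝ} {c e : ℝ} (hce : c < e) (h1 : ∀ x ∈ s, c ≤ x)
    (h2 : ∀ x, c < x → x < e → x ∈ s) : sInf s = c := by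
  apply le_antisymm
  · by_contra! hlt
    obtain ⟨x, hx1, hx2⟩ := exists_between (lt_min hlt hce)
    have := csInf_le ⟨c, h1⟩ (h2 x hx1 (lt_of_lt_of_le hx2 (min_le_right _ _)))
    have := lt_of_lt_of_le hx2 (min_le_left _ _)
    linarith
  · obtain ⟨x, hx1, hx2⟩ := exists_between hce
    exact le_csInf ⟨x, h2 x hx1 hx2⟩ h1

lemma sSup_of_near {s : Set ℝ} {c e : ℝ} (hce : e < c) (h1 : ∀ x ∈ s, x ≤ c)
    (h2 : ∀ x, e < x → x < c → x ∈ s) : sSup s = c := by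
  apply le_antisymm
  · obtain ⟨x, hx1, hx2⟩ := exists_between hce
    exact csSup_le ⟨x, h2 x hx1 hx2⟩ h1
  · by_contra! hlt
    obtain ⟨x, hx1, hx2⟩ := exists_between (max_lt hlt hce)
    have := le_csSup ⟨c, h1⟩ (h2 x (lt_of_le_of_lt (le_max_right _ _) hx1) hx2)
    have := lt_of_le_of_lt (le_max_left _ _) hx1
    linarith

/-- A hanging shape fills its outer box, provided the removed boxes do not reach its bottom and
leave free some abscissa `x0`. -/
lemma hasBox_hreg {l r d m x0 : ℝ} {L : List (ℝ × ℝ × ℝ)} (hm : ∀ b ∈ L, b.2.2 ≤ m)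
    (hmd : m < d) (h0 : 0 ≤ m) (hl : l < x0) (hr : x0 < r)
    (hgap : ∀ b ∈ L, ¬ (b.1 ≤ x0 ∧ x0 ≤ b.2.1)) : HasBox (hreg l r d L) l r d := by
  have hlr := hl.trans hr
  have hU := isOpen_hang l r d L
  have hne : (hang l r d L).Nonempty := ⟨(x0, -((m + d) / 2)), hl, hr, by simp only; linarith,
    by simp only; linarith, fun b hb hc => hgap b hb ⟨hc.1, hc.2.1⟩⟩
  have hsub : hang l r d L ⊆ interior (hreg l r d L) := interior_maximal subset_closure hU
  have hbox : hreg l r d L ⊆ Icc l r ×ˢ Icc (-d) 0 :=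
    closure_minimal (fun p hp => ⟨⟨hp.1.le, hp.2.1.le⟩, hp.2.2.1.le, hp.2.2.2.1.le⟩)
      (isClosed_Icc.prod isClosed_Icc)
  have hbot : ∀ x, l < x → x < r → ((x, -((m + d) / 2)) : ℝ × ℝ) ∈ hreg l r d L := by
    intro x h1 h2
    refine subset_closure ⟨h1, h2, by simp only; linarith, by simp only; linarith,
      fun b hb hc => ?_⟩
    have := hm b hb
    simp only at hc
    linarith
  have hcol : ∀ y, -d < y → y < 0 → ((x0, y) : ℝ × ℝ) ∈ hreg l r d L := fun y h1 h2 =>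
    subset_closure ⟨hl, hr, h1, h2, fun b hb hc => hgap b hb ⟨hc.1, hc.2.1⟩⟩
  refine ⟨⟨⟨hne.mono subset_closure,
    (Bornology.IsBounded.prod (Metric.isBounded_Icc _ _) (Metric.isBounded_Icc _ _)).subset hbox,
    ?_⟩, hne.mono hsub, ?_⟩, ?_, ?_, ?_, ?_, hlr, by linarith⟩
  · exact (closure_mono hsub).antisymm (closure_minimal interior_subset isClosed_closure)
  · exact (isPreconnected_hang hm hmd h0).subset_closure hsub interior_subset
  · refine sInf_of_near hlr ?_ fun x h1 h2 => ⟨_, hbot x h1 h2, rfl⟩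
    rintro _ ⟨p, hp, rfl⟩
    exact (hbox hp).1.1
  · refine sSup_of_near hlr ?_ fun x h1 h2 => ⟨_, hbot x h1 h2, rfl⟩
    rintro _ ⟨p, hp, rfl⟩
    exact (hbox hp).1.2
  · refine sInf_of_near (e := 0) (by linarith) ?_ fun y h1 h2 => ⟨_, hcol y h1 h2, rfl⟩
    rintro _ ⟨p, hp, rfl⟩
    exact (hbox hp).2.1
  · refine sSup_of_near (e := -d) (by linarith) ?_ fun y h1 h2 => ⟨_, hcol y h1 h2, rfl⟩
    rintro _ ⟨p, hp, rfl⟩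
    exact (hbox hp).2.2

/-- The open tiles of the box `[l, r] × [-d, 0]`, as seen by points below the line `y = 0`: the
bound `p.2 < 0` is left out of the middle row, and the three northern tiles are empty. -/
def otile (l r d : ℝ) : Tile → ℝ × ℝ → Prop
  | .O, p => l < p.1 ∧ p.1 < r ∧ -d < p.2
  | .W, p => p.1 < l ∧ -d < p.2
  | .E, p => r < p.1 ∧ -d < p.2
  | .S, p => l < p.1 ∧ p.1 < r ∧ p.2 < -d
  | .SW, p => p.1 < l ∧ p.2 < -d
  | .SE, p => r < p.1 ∧ p.2 < -d
  | _, _ => False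

/-- For hanging shapes a CDC constraint can be tested on the open shape and the open tiles. -/
lemma cdc_hreg {l r d l' r' d' : ℝ} {L : List (ℝ × ℝ × ℝ)} {b : Reg} {T : Set Tile}
    (hb : HasBox b l' r' d')
    (h : ∀ χ, (∃ p ∈ hang l r d L, otile l' r' d' χ p) ↔ χ ∈ T) : cdc (hreg l r d L) T b := by
  have hlr := hb.lr
  have hd := hb.dpos
  intro χ
  rw [← h χ]
  have hU := isOpen_hang l r d L
  have hsub : hang l r d L ⊆ interior (hreg l r d L) := interior_maximal subset_closure hU
  have key : (interior (hreg l r d L) ∩ χ.region b).Nonempty →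
      χ.region b ⊆ closure (interior (χ.region b)) →
      ∃ p ∈ hang l r d L, p ∈ interior (χ.region b) := by
    rintro ⟨p, hp, hp'⟩ hreg'
    obtain ⟨q, hq1, hq2⟩ := mem_closure_iff.1 (hreg' hp') _ isOpen_interior hp
    obtain ⟨z, ⟨-, hz1⟩, hz2⟩ := mem_closure_iff.1 (interior_subset hq1 : q ∈ closure _)
      _ (isOpen_interior.inter isOpen_interior) ⟨hq1, hq2⟩
    exact ⟨z, hz2, hz1⟩
  have hne1 : l' ≠ r' := hlr.ne
  have hne2 : -d' ≠ 0 := by linarith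
  constructor
  · intro hh
    obtain ⟨p, hp, hp'⟩ := key hh (by
      cases χ <;> simp only [Tile.region, Ix, Iy, hb.xm, hb.xp, hb.ym, hb.yp, interior_prod_eq,
        interior_Icc, interior_Ici, interior_Iic, closure_prod_eq, closure_Ioo hne1,
        closure_Ioo hne2, closure_Ioi, closure_Iio, subset_refl])
    refine ⟨p, hp, ?_⟩
    obtain ⟨p1, p2, p3, p4, -⟩ := hp
    cases χ <;> simp only [Tile.region, Ix, Iy, hb.xm, hb.xp, hb.ym, hb.yp, interior_prod_eq,
        interior_Icc, interior_Ici, interior_Iic, mem_prod, mem_Ioo, mem_Ioi, mem_Iio, otile]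
        at hp' ⊢ <;> grind
  · rintro ⟨p, hp, hp'⟩
    refine ⟨p, hsub hp, ?_⟩
    obtain ⟨p1, p2, p3, p4, -⟩ := hp
    cases χ <;> simp only [Tile.region, Ix, Iy, hb.xm, hb.xp, hb.ym, hb.yp,
        mem_prod, mem_Icc, mem_Ici, mem_Iic, otile] at hp' ⊢ <;> grind

/-- The rectangle `[l, r] × [-d, 0]`. -/
def rect (l r d : ℝ) : Reg := hreg l r d []

lemma hasBox_rect {l r d : ℝ} (hlr : l < r) (hd : 0 < d) : HasBox (rect l r d) l r d :=
  hasBox_hreg (m := 0) (x0 := (l + r) / 2) (by simp) hd le_rfl (by linarith) (by linarith) (by simp)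

/-- The tiles met by a rectangle, in terms of the edges of the boxes. -/
lemma cdc_rect {l r d l' r' d' : ℝ} {b : Reg} {T : Set Tile} (hlr : l < r) (hd : 0 < d)
    (hb : HasBox b l' r' d')
    (hO : Tile.O ∈ T ↔ l < r' ∧ l' < r) (hW : Tile.W ∈ T ↔ l < l') (hE : Tile.E ∈ T ↔ r' < r)
    (hS : Tile.S ∈ T ↔ (l < r' ∧ l' < r) ∧ d' < d) (hSW : Tile.SW ∈ T ↔ l < l' ∧ d' < d)
    (hSE : Tile.SE ∈ T ↔ r' < r ∧ d' < d)
    (hN : Tile.N ∉ T) (hNW : Tile.NW ∉ T) (hNE : Tile.NE ∉ T) : cdc (rect l r d) T b := by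
  have hlr' := hb.lr
  have hd' := hb.dpos
  have hmid : l < r' → l' < r → ∃ x, l < x ∧ x < r ∧ l' < x ∧ x < r' := fun h1 h2 => by
    obtain ⟨x, hx1, hx2⟩ := exists_between (max_lt (lt_min hlr h1) (lt_min h2 hlr'))
    simp only [max_lt_iff, lt_min_iff] at hx1 hx2
    exact ⟨x, hx1.1, hx2.1, hx1.2, hx2.2⟩
  have hwest : l < l' → ∃ x, l < x ∧ x < r ∧ x < l' := fun h1 => by
    obtain ⟨x, hx1, hx2⟩ := exists_between (lt_min hlr h1)
    exact ⟨x, hx1, (lt_min_iff.1 hx2).1, (lt_min_iff.1 hx2).2⟩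
  have heast : r' < r → ∃ x, l < x ∧ x < r ∧ r' < x := fun h1 => by
    obtain ⟨x, hx1, hx2⟩ := exists_between (max_lt hlr h1)
    exact ⟨x, (max_lt_iff.1 hx1).1, hx2, (max_lt_iff.1 hx1).2⟩
  obtain ⟨y, hy1, hy2⟩ : ∃ y, max (-d) (-d') < y ∧ y < 0 :=
    exists_between (max_lt (by linarith) (by linarith))
  obtain ⟨hy1, hy3⟩ := max_lt_iff.1 hy1
  have hsouth : d' < d → ∃ z, -d < z ∧ z < 0 ∧ z < -d' := fun h => by
    obtain ⟨z, hz1, hz2⟩ := exists_between (neg_lt_neg h)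
    exact ⟨z, hz1, by linarith, hz2⟩
  refine cdc_hreg hb fun χ => ?_
  cases χ <;> simp only [hO, hW, hE, hS, hSW, hSE, hN, hNW, hNE, otile, and_false, exists_false]
  all_goals constructor
  all_goals first
    | (rintro ⟨p, ⟨p1, p2, p3, p4, -⟩, hp⟩
       grind)
    | skip
  · intro h1
    obtain ⟨x, hx⟩ := hwest h1
    exact ⟨(x, y), ⟨hx.1, hx.2.1, hy1, hy2, by simp⟩, hx.2.2, hy3⟩
  · rintro ⟨h1, h2⟩
    obtain ⟨x, hx⟩ := hmid h1 h2
    exact ⟨(x, y), ⟨hx.1, hx.2.1, hy1, hy2, by simp⟩, hx.2.2.1, hx.2.2.2, hy3⟩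
  · intro h1
    obtain ⟨x, hx⟩ := heast h1
    exact ⟨(x, y), ⟨hx.1, hx.2.1, hy1, hy2, by simp⟩, hx.2.2, hy3⟩
  · rintro ⟨h1, h2⟩
    obtain ⟨x, hx⟩ := hwest h1
    obtain ⟨z, hz⟩ := hsouth h2
    exact ⟨(x, z), ⟨hx.1, hx.2.1, hz.1, hz.2.1, by simp⟩, hx.2.2, hz.2.2⟩
  · rintro ⟨⟨h1, h2⟩, h3⟩
    obtain ⟨x, hx⟩ := hmid h1 h2
    obtain ⟨z, hz⟩ := hsouth h3
    exact ⟨(x, z), ⟨hx.1, hx.2.1, hz.1, hz.2.1, by simp⟩, hx.2.2.1, hx.2.2.2, hz.2.2⟩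
  · rintro ⟨h1, h2⟩
    obtain ⟨x, hx⟩ := heast h1
    obtain ⟨z, hz⟩ := hsouth h2
    exact ⟨(x, z), ⟨hx.1, hx.2.1, hz.1, hz.2.1, by simp⟩, hx.2.2, hz.2.2⟩

section rect
variable {l r d l' r' d' : ℝ} {b : Reg}

lemma rect_O (hlr : l < r) (hd : 0 < d) (hb : HasBox b l' r' d') (h1 : l' ≤ l) (h2 : r ≤ r')
    (h3 : d ≤ d') : cdc (rect l r d) {Tile.O} b := by
  have := hb.lr
  apply cdc_rect hlr hd hb <;> simp <;> grind

lemma rect_ESESO (hlr : l < r) (hd : 0 < d) (hb : HasBox b l' r' d') (h1 : l' ≤ l) (h2 : l < r')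
    (h3 : r' < r) (h4 : d' < d) :
    cdc (rect l r d) {Tile.E, Tile.SE, Tile.S, Tile.O} b := by
  have := hb.lr
  apply cdc_rect hlr hd hb <;> simp <;> grind

lemma rect_SO (hlr : l < r) (hd : 0 < d) (hb : HasBox b l r d') (h4 : d' < d) :
    cdc (rect l r d) {Tile.S, Tile.O} b := by
  apply cdc_rect hlr hd hb <;> simp <;> grind

lemma rect_E (hlr : l < r) (hd : 0 < d) (hb : HasBox b l' r' d') (h1 : r' ≤ l) (h3 : d ≤ d') :
    cdc (rect l r d) {Tile.E} b := by
  have := hb.lr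
  apply cdc_rect hlr hd hb <;> simp <;> grind

lemma rect_W (hlr : l < r) (hd : 0 < d) (hb : HasBox b l' r' d') (h1 : r ≤ l') (h3 : d ≤ d') :
    cdc (rect l r d) {Tile.W} b := by
  have := hb.lr
  apply cdc_rect hlr hd hb <;> simp <;> grind

lemma rect_WO (hlr : l < r) (hd : 0 < d) (hb : HasBox b l' r' d') (h1 : l < l') (h2 : l' < r)
    (h3 : r ≤ r') (h4 : d ≤ d') : cdc (rect l r d) {Tile.W, Tile.O} b := by
  have := hb.lr
  apply cdc_rect hlr hd hb <;> simp <;> grind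

lemma rect_EO (hlr : l < r) (hd : 0 < d) (hb : HasBox b l' r' d') (h1 : l' ≤ l) (h2 : l < r')
    (h3 : r' < r) (h4 : d ≤ d') : cdc (rect l r d) {Tile.E, Tile.O} b := by
  have := hb.lr
  apply cdc_rect hlr hd hb <;> simp <;> grind

lemma rect_SSWWO (hlr : l < r) (hd : 0 < d) (hb : HasBox b l' r' d') (h1 : l < l') (h2 : l' < r)
    (h3 : r ≤ r') (h4 : d' < d) :
    cdc (rect l r d) {Tile.S, Tile.SW, Tile.W, Tile.O} b := by
  have := hb.lr
  apply cdc_rect hlr hd hb <;> simp <;> grind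

end rect

/-! ### Non-rectangular regions of the solution -/

/-- A box with another box cut out of its upper-left corner. -/
def lshape (x w d W D : ℝ) : Reg := hreg x (x + W) D [(x, x + w, d)]

lemma hasBox_lshape {x w d W D : ℝ} (hw : 0 < w) (hd : 0 < d) (hW : w < W) (hD : d < D) :
    HasBox (lshape x w d W D) x (x + W) D :=
  hasBox_hreg (m := d) (x0 := x + (w + W) / 2) (by simp) hD hd.le (by linarith) (by linarith)
    (by simp only [List.mem_singleton, forall_eq]; rintro ⟨-, h⟩; linarith)

/-- Two boxes with the same upper-left corner, neither containing the other, satisfy `N_⌜`: the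
auxiliary regions are a larger box minus one of the two. -/
lemma netULC_rect {x w d w' d' W D : ℝ} (hw : 0 < w) (hd : 0 < d) (hw' : 0 < w') (hd' : 0 < d')
    (hW : w < W) (hD : d < D) (hW' : w' < W) (hD' : d' < D)
    (h : (w < w' ∧ d' < d) ∨ (w' < w ∧ d < d')) :
    NetULC (rect x (x + w) d) (rect x (x + w') d') (lshape x w' d' W D) (lshape x w d W D) := by
  have main : ∀ {w d w' d' : ℝ}, 0 < w → 0 < d → 0 < w' → 0 < d' → w < W → d < D → w' < W →
      d' < D → (w < w' ∧ d' < d) ∨ (w' < w ∧ d < d') →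
      cdc (lshape x w' d' W D) {Tile.E, Tile.SE, Tile.S, Tile.O} (rect x (x + w) d) ∧
      cdc (lshape x w' d' W D) {Tile.E, Tile.SE, Tile.S} (rect x (x + w') d') := by
    clear * -
    intro w d w' d' hw hd hw' hd' hW hD hW' hD' hincomparable
    -- the witnesses `pE`, `pSE`, `pS` lie east, south-east and south of both boxes
    have hmW : max w w' < W := max_lt hW hW'
    have hmD : max d d' < D := max_lt hD hD'
    have m1 := le_max_left w w'
    have m2 := le_max_right w w'
    have m3 := le_max_left d d'
    have m4 := le_max_right d d'
    have k1 := min_le_left w w'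
    have k2 := min_le_right w w'
    have k0 : 0 < min w w' := lt_min hw hw'
    have j1 := min_le_left d d'
    have j2 := min_le_right d d'
    have j0 : 0 < min d d' := lt_min hd hd'
    have pE : ((x + (max w w' + W) / 2, -(min d d' / 2)) : ℝ × ℝ) ∈
        hang x (x + W) D [(x, x + w', d')] := by
      refine ⟨by simp only; linarith, by simp only; linarith, by simp only; linarith,
        by simp only; linarith, ?_⟩
      simp only [List.mem_singleton, forall_eq]
      rintro ⟨-, h, -⟩; linarith
    have pSE : ((x + (max w w' + W) / 2, -((max d d' + D) / 2)) : ℝ × ℝ) ∈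
        hang x (x + W) D [(x, x + w', d')] := by
      refine ⟨by simp only; linarith, by simp only; linarith, by simp only; linarith,
        by simp only; linarith, ?_⟩
      simp only [List.mem_singleton, forall_eq]
      rintro ⟨-, h, -⟩; linarith
    have pS : ((x + min w w' / 2, -((max d d' + D) / 2)) : ℝ × ℝ) ∈
        hang x (x + W) D [(x, x + w', d')] := by
      refine ⟨by simp only; linarith, by simp only; linarith, by simp only; linarith,
        by simp only; linarith, ?_⟩
      simp only [List.mem_singleton, forall_eq]
      rintro ⟨-, -, h⟩; linarith
    have pO : ∃ p ∈ hang x (x + W) D [(x, x + w', d')], otile x (x + w) d Tile.O p := by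
      rcases hincomparable with ⟨h1, h2⟩ | ⟨h1, h2⟩
      · refine ⟨(x + w / 2, -((d + d') / 2)), ⟨by simp only; linarith, by simp only; linarith,
          by simp only; linarith, by simp only; linarith, ?_⟩, by simp only; linarith,
          by simp only; linarith, by simp only; linarith⟩
        simp only [List.mem_singleton, forall_eq]
        rintro ⟨-, -, h⟩; linarith
      · refine ⟨(x + (w + w') / 2, -(d / 2)), ⟨by simp only; linarith, by simp only; linarith,
          by simp only; linarith, by simp only; linarith, ?_⟩, by simp only; linarith,
          by simp only; linarith, by simp only; linarith⟩
        simp only [List.mem_singleton, forall_eq]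
        rintro ⟨-, h, -⟩; linarith
    constructor
    · refine cdc_hreg (hasBox_rect (by linarith) hd) fun χ => ?_
      cases χ <;> simp only [mem_insert_iff, mem_singleton_iff, reduceCtorEq, or_false, or_true,
        iff_true, iff_false, otile]
      case O => exact pO
      case E => exact ⟨_, pE, by simp only; linarith, by simp only; linarith⟩
      case SE => exact ⟨_, pSE, by simp only; linarith, by simp only; linarith⟩
      case S => exact ⟨_, pS, by simp only; linarith, by simp only; linarith,
        by simp only; linarith⟩
      all_goals
        rintro ⟨p, ⟨p1, p2, p3, p4, -⟩, hp⟩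
        first | exact hp | (have := hp.1; linarith)
    · refine cdc_hreg (hasBox_rect (by linarith) hd') fun χ => ?_
      cases χ <;> simp only [mem_insert_iff, mem_singleton_iff, reduceCtorEq, or_false, or_true,
        iff_true, iff_false, otile]
      case E => exact ⟨_, pE, by simp only; linarith, by simp only; linarith⟩
      case SE => exact ⟨_, pSE, by simp only; linarith, by simp only; linarith⟩
      case S => exact ⟨_, pS, by simp only; linarith, by simp only; linarith,
        by simp only; linarith⟩
      case O =>
        rintro ⟨p, ⟨p1, p2, p3, p4, p5⟩, q1, q2, q3⟩
        exact p5 _ (List.mem_singleton.2 rfl) ⟨q1.le, q2.le, q3.le⟩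
      all_goals
        rintro ⟨p, ⟨p1, p2, p3, p4, -⟩, hp⟩
        first | exact hp | (have := hp.1; linarith)
  have b1 := hasBox_lshape (x := x) hw hd hW hD
  have b2 := hasBox_lshape (x := x) hw' hd' hW' hD'
  obtain ⟨c1, c2⟩ := main hw hd hw' hd' hW hD hW' hD' h
  obtain ⟨c3, c4⟩ := main hw' hd' hw hd hW' hD' hW hD h.symm
  exact ⟨rect_O (by linarith) hd b2 le_rfl (by linarith) hD.le, c1,
    rect_O (by linarith) hd' b2 le_rfl (by linarith) hD'.le, c2,
    rect_O (by linarith) hd' b1 le_rfl (by linarith) hD'.le, c3,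
    rect_O (by linarith) hd b1 le_rfl (by linarith) hD.le, c4⟩

section comb
variable {l r d m l' r' d' : ℝ} {L : List (ℝ × ℝ × ℝ)} {b : Reg}

lemma hang_bottom (hm : ∀ b ∈ L, b.2.2 ≤ m) (hmd : m < d) (h0 : 0 ≤ m) {x : ℝ} (h1 : l < x)
    (h2 : x < r) : ((x, -((m + d) / 2)) : ℝ × ℝ) ∈ hang l r d L := by
  refine ⟨h1, h2, by simp only; linarith, by simp only; linarith, fun b hb hc => ?_⟩
  have := hm b hb
  simp only at hc
  linarith

/-- The relation of a hanging shape to a box removed strictly inside its width. -/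
lemma hreg_middle (hm : ∀ b ∈ L, b.2.2 ≤ m) (hmd : m < d) (h0 : 0 ≤ m)
    (hb : HasBox b l' r' d') (hL : (l', r', d') ∈ L) (h1 : l < l') (h2 : r' < r)
    (hW : ∃ p ∈ hang l r d L, p.1 < l' ∧ -d' < p.2)
    (hE : ∃ p ∈ hang l r d L, r' < p.1 ∧ -d' < p.2) :
    cdc (hreg l r d L) {Tile.E, Tile.SE, Tile.S, Tile.SW, Tile.W} b := by
  have hlr := hb.lr
  have hd := hm _ hL
  simp only at hd
  refine cdc_hreg hb fun χ => ?_
  cases χ <;> simp only [mem_insert_iff, mem_singleton_iff, reduceCtorEq, or_false, or_true,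
    iff_true, iff_false, otile, and_false, exists_false]
  case W => exact hW
  case E => exact hE
  case O =>
    rintro ⟨p, ⟨p1, p2, p3, p4, p5⟩, q1, q2, q3⟩
    exact p5 _ hL ⟨q1.le, q2.le, q3.le⟩
  case SW => exact ⟨_, hang_bottom hm hmd h0 (x := (l + l') / 2) (by linarith) (by linarith),
    by simp only; linarith, by simp only; linarith⟩
  case S => exact ⟨_, hang_bottom hm hmd h0 (x := (l' + r') / 2) (by linarith) (by linarith),
    by simp only; linarith, by simp only; linarith, by simp only; linarith⟩
  case SE => exact ⟨_, hang_bottom hm hmd h0 (x := (r' + r) / 2) (by linarith) (by linarith),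
    by simp only; linarith, by simp only; linarith⟩

/-- The relation of a hanging shape to a box removed at its left edge. -/
lemma hreg_left (hm : ∀ b ∈ L, b.2.2 ≤ m) (hmd : m < d) (h0 : 0 ≤ m)
    (hb : HasBox b l r' d') (hL : (l, r', d') ∈ L) (h2 : r' < r)
    (hE : ∃ p ∈ hang l r d L, r' < p.1 ∧ -d' < p.2) :
    cdc (hreg l r d L) {Tile.E, Tile.SE, Tile.S} b := by
  have hlr := hb.lr
  have hd := hm _ hL
  simp only at hd
  refine cdc_hreg hb fun χ => ?_
  cases χ <;> simp only [mem_insert_iff, mem_singleton_iff, reduceCtorEq, or_false, or_true,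
    iff_true, iff_false, otile, and_false, exists_false]
  case E => exact hE
  case O =>
    rintro ⟨p, ⟨p1, p2, p3, p4, p5⟩, q1, q2, q3⟩
    exact p5 _ hL ⟨q1.le, q2.le, q3.le⟩
  case S => exact ⟨_, hang_bottom hm hmd h0 (x := (l + r') / 2) (by linarith) (by linarith),
    by simp only; linarith, by simp only; linarith, by simp only; linarith⟩
  case SE => exact ⟨_, hang_bottom hm hmd h0 (x := (r' + r) / 2) (by linarith) (by linarith),
    by simp only; linarith, by simp only; linarith⟩
  all_goals
    rintro ⟨p, ⟨p1, -⟩, hp⟩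
    linarith [hp.1]

/-- The relation of a hanging shape to a box removed at its right edge. -/
lemma hreg_right (hm : ∀ b ∈ L, b.2.2 ≤ m) (hmd : m < d) (h0 : 0 ≤ m)
    (hb : HasBox b l' r d') (hL : (l', r, d') ∈ L) (h1 : l < l')
    (hW : ∃ p ∈ hang l r d L, p.1 < l' ∧ -d' < p.2) :
    cdc (hreg l r d L) {Tile.S, Tile.SW, Tile.W} b := by
  have hlr := hb.lr
  have hd := hm _ hL
  simp only at hd
  refine cdc_hreg hb fun χ => ?_
  cases χ <;> simp only [mem_insert_iff, mem_singleton_iff, reduceCtorEq, or_false, or_true,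
    iff_true, iff_false, otile, and_false, exists_false]
  case W => exact hW
  case O =>
    rintro ⟨p, ⟨p1, p2, p3, p4, p5⟩, q1, q2, q3⟩
    exact p5 _ hL ⟨q1.le, q2.le, q3.le⟩
  case SW => exact ⟨_, hang_bottom hm hmd h0 (x := (l + l') / 2) (by linarith) (by linarith),
    by simp only; linarith, by simp only; linarith⟩
  case S => exact ⟨_, hang_bottom hm hmd h0 (x := (l' + r) / 2) (by linarith) (by linarith),
    by simp only; linarith, by simp only; linarith, by simp only; linarith⟩
  all_goals
    rintro ⟨p, ⟨-, p2, -⟩, hp⟩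
    linarith [hp.1]

end comb

/-! ### Sufficiency: the solution attached to a satisfying assignment -/

/-- Left edge of the group of regions belonging to the variable `p_i`. -/
def gx {n : ℕ} (i : Fin n) : ℝ := 20 * ((i : ℕ) + 1)

/-- Width of the region of the literal with sign `b` under the truth value `t`. -/
def litW : Bool → Bool → ℝ
  | true, true => 1
  | true, false => 5
  | false, true => 7
  | false, false => 4

/-- Depth of the region of the literal with sign `b` under the truth value `t`. -/
def litD : Bool → Bool → ℝ
  | true, true => 5
  | true, false => 2
  | false, true => 4
  | false, false => 7

/-- The frames of `p_i` are squares of side 3, 6 and 9, and the regions of the two literals have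
the sizes `litW × litD`. -/
def solV {n : ℕ} (π : Fin n → Bool) : VAssign n where
  u i := rect (gx i) (gx i + litW true (π i)) (litD true (π i))
  un i := rect (gx i) (gx i + litW false (π i)) (litD false (π i))
  f i := rect (gx i) (gx i + 3) 3
  fn i := rect (gx i) (gx i + 6) 6
  f0 i := rect (gx i) (gx i + 9) 9
  a1 i := lshape (gx i) 3 3 10 10
  a2 i := lshape (gx i) (litW true (π i)) (litD true (π i)) 10 10
  b1 i := lshape (gx i) 6 6 10 10
  b2 i := lshape (gx i) (litW false (π i)) (litD false (π i)) 10 10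
  c1 i := lshape (gx i) (litW false (π i)) (litD false (π i)) 10 10
  c2 i := lshape (gx i) (litW true (π i)) (litD true (π i)) 10 10
  wref := rect 0 10 1
  fref := rect 0 10 3
  fnref := rect 0 10 6
  f0ref := rect 0 10 9
  pf i := rect (gx i - 7) (gx i - 3) 3
  pfn i := rect (gx i - 7) (gx i - 3) 6
  pf0 i := rect (gx i - 7) (gx i - 3) 9

lemma gx_ge {n : ℕ} (i : Fin n) : 20 ≤ gx i := by
  have : (0 : ℝ) ≤ (i : ℕ) := Nat.cast_nonneg _
  unfold gx; linarith

lemma gx_lt {n : ℕ} {i j : Fin n} (h : i < j) : gx i + 20 ≤ gx j := by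
  have h' : (i : ℕ) + 1 ≤ (j : ℕ) := h
  have : ((i : ℕ) : ℝ) + 1 ≤ (j : ℕ) := by exact_mod_cast h'
  unfold gx; linarith

lemma solV_conn {n : ℕ} (π : Fin n → Bool) : (solV π).AllConn := by
  refine ⟨fun i => ?_, (hasBox_rect (by norm_num) (by norm_num)).conn,
    (hasBox_rect (by norm_num) (by norm_num)).conn, (hasBox_rect (by norm_num) (by norm_num)).conn,
    (hasBox_rect (by norm_num) (by norm_num)).conn⟩
  simp only [solV]
  cases π i <;> simp only [litW, litD] <;>
  refine ⟨?_, ?_, ?_, ?_, ?_, ?_, ?_, ?_, ?_, ?_, ?_, ?_, ?_, ?_⟩ <;>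
  first
    | exact (hasBox_rect (by linarith) (by norm_num)).conn
    | exact (hasBox_lshape (by norm_num) (by norm_num) (by norm_num) (by norm_num)).conn

lemma netPar_rect {l r d l' r' a b : ℝ} (hd : 0 < d) (h1 : l' < r') (h2 : r' ≤ a) (h3 : a < b)
    (h4 : b ≤ l) (h5 : l < r) : NetPar (rect l r d) (rect l' r' d) (rect a b d) :=
  ⟨rect_E h5 hd (hasBox_rect h3 hd) h4 le_rfl, rect_E h3 hd (hasBox_rect h1 hd) h2 le_rfl,
    rect_W h1 hd (hasBox_rect h5 hd) (by linarith) le_rfl⟩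

lemma netPar_chain {n : ℕ} {w d : ℝ} (hw : 0 < w) (hw' : w ≤ 9) (hd : 0 < d) (i : Fin n) :
    NetPar (rect (gx i) (gx i + w) d)
      (prevOr (fun i : Fin n => rect (gx i) (gx i + w) d) (rect 0 10 d) i)
      (rect (gx i - 7) (gx i - 3) d) := by
  unfold prevOr
  have h20 := gx_ge i
  split_ifs with h
  · have := gx_lt (i := (⟨i.val - 1, lt_of_le_of_lt (Nat.sub_le _ _) i.isLt⟩ : Fin n)) (j := i)
      (by rw [Fin.lt_def]; simp only; omega)
    exact netPar_rect hd (by linarith) (by linarith) (by linarith) (by linarith) (by linarith)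
  · exact netPar_rect hd (by linarith) (by linarith) (by linarith) (by linarith) (by linarith)

lemma solV_holds {n : ℕ} (π : Fin n → Bool) : (solV π).Holds := by
  refine ⟨fun i => ?_, ?_, netPar_chain (by norm_num) (by norm_num) (by norm_num),
    netPar_chain (by norm_num) (by norm_num) (by norm_num),
    netPar_chain (by norm_num) (by norm_num) (by norm_num)⟩
  · simp only [solV]
    have bx : ∀ {w d : ℝ}, 0 < w → 0 < d → HasBox (rect (gx i) (gx i + w) d) (gx i) (gx i + w) d :=
      fun hw hd => hasBox_rect (by linarith) hd
    have nO : ∀ {w d w' d' : ℝ}, 0 < w → 0 < d → w ≤ w' → d ≤ d' →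
        cdc (rect (gx i) (gx i + w) d) {Tile.O} (rect (gx i) (gx i + w') d') :=
      fun h1 h2 h3 h4 => rect_O (by linarith) h2 (bx (by linarith) (by linarith)) le_rfl
        (by linarith) h4
    have nS : ∀ {w d w' d' : ℝ}, 0 < w' → 0 < d' → w' < w → d' < d →
        cdc (rect (gx i) (gx i + w) d) {Tile.E, Tile.SE, Tile.S, Tile.O}
          (rect (gx i) (gx i + w') d') :=
      fun h1 h2 h3 h4 => rect_ESESO (by linarith) (by linarith) (bx h1 h2) le_rfl (by linarith)
        (by linarith) h4
    cases π i <;> simp only [litW, litD] <;>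
    refine ⟨?_, ?_, ?_, ?_, ?_, ?_, ?_, ?_, ?_, ?_, ?_⟩ <;>
    first
      | (apply nO <;> norm_num)
      | (apply nS <;> norm_num)
      | (apply netULC_rect <;> norm_num)
  · refine ⟨?_, ?_, ?_, ?_, ?_, ?_⟩ <;>
    first
      | exact rect_O (by norm_num) (by norm_num) (hasBox_rect (by norm_num) (by norm_num))
          le_rfl le_rfl (by norm_num)
      | exact rect_SO (by norm_num) (by norm_num) (hasBox_rect (by norm_num) (by norm_num))
          (by norm_num)

lemma solV_vert {n : ℕ} (π : Fin n → Bool) (i : Fin n) :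
    Vert ((solV π).u i) ((solV π).f i) ↔ π i = true := by
  simp only [solV, Vert, RA, RAs, RAfi, RAf]
  have hf := hasBox_rect (l := gx i) (r := gx i + 3) (d := 3) (by linarith) (by norm_num)
  cases π i
  · have hu := hasBox_rect (l := gx i) (r := gx i + 5) (d := 2) (by linarith) (by norm_num)
    simp only [litW, litD, hu.xp, hf.xp]
    norm_num
  · have hu := hasBox_rect (l := gx i) (r := gx i + 1) (d := 5) (by linarith) (by norm_num)
    simp only [litW, litD, hu.xp, hf.xp, hu.xm, hf.xm, hu.ym, hf.ym, hu.yp, hf.yp]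
    norm_num

/-- Offset, from the left edge of the group, at which the region following the literal of sign `b`
starts. It lies inside the frame, and to the right of the literal's region iff the literal is
true. -/
def nextX : Bool → ℝ
  | true => 2
  | false => 5

/-- The boxes of the seven regions of `X_c`. -/
def teeth {n : ℕ} (c : Clause n) (π : Fin n → Bool) : List (ℝ × ℝ × ℝ) :=
  [(gx c.r - 1, gx c.r + 1, 1),
    (gx c.r, gx c.r + litW c.sr (π c.r), litD c.sr (π c.r)),
    (gx c.r + nextX c.sr, gx c.s + 1, 3),
    (gx c.s, gx c.s + litW c.ss (π c.s), litD c.ss (π c.s)),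
    (gx c.s + nextX c.ss, gx c.t + 1, 3),
    (gx c.t, gx c.t + litW c.st (π c.t), litD c.st (π c.t)),
    (gx c.t + nextX c.st, gx c.t + 20, 1)]

/-- The regions of the clause network; `v_c` is a large box minus the seven boxes of `X_c`. -/
def solC {n : ℕ} (c : Clause n) (π : Fin n → Bool) : CAssign where
  vc := hreg (gx c.r - 1) (gx c.t + 20) 10 (teeth c π)
  w0 := rect (gx c.r - 1) (gx c.r + 1) 1
  wrs := rect (gx c.r + nextX c.sr) (gx c.s + 1) 3
  wst := rect (gx c.s + nextX c.ss) (gx c.t + 1) 3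
  w1 := rect (gx c.t + nextX c.st) (gx c.t + 20) 1
  pa := rect 13 17 1
  pb := rect 13 17 1

lemma litW_bd (b t : Bool) : 1 ≤ litW b t ∧ litW b t ≤ 7 := by
  cases b <;> cases t <;> norm_num [litW]

lemma litD_bd (b t : Bool) : 2 ≤ litD b t ∧ litD b t ≤ 7 := by
  cases b <;> cases t <;> norm_num [litD]

lemma nextX_bd (b : Bool) : 2 ≤ nextX b ∧ nextX b ≤ 5 := by
  cases b <;> norm_num [nextX]

/-- A true literal leaves a gap between its region and the next one. -/
lemma litW_lt_nextX (b : Bool) : litW b b < nextX b := by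
  cases b <;> norm_num [litW, nextX]

lemma ustar_solV {n : ℕ} (π : Fin n → Bool) (i : Fin n) (b : Bool) :
    ustar (solV π) i b = rect (gx i) (gx i + litW b (π i)) (litD b (π i)) := by
  cases b <;> simp [ustar, solV]

/-- A true literal provides an abscissa avoiding all seven boxes. -/
lemma exists_gap {n : ℕ} (c : Clause n) (π : Fin n → Bool)
    (h : π c.r = c.sr ∨ π c.s = c.ss ∨ π c.t = c.st) :
    ∃ x0, gx c.r + 1 < x0 ∧ x0 < gx c.t + nextX c.st ∧
      ∀ b ∈ teeth c π, ¬ (b.1 ≤ x0 ∧ x0 ≤ b.2.1) := by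
  have hrs := gx_lt c.hrs
  have hst := gx_lt c.hst
  have w1 := litW_bd c.sr (π c.r)
  have w2 := litW_bd c.ss (π c.s)
  have w3 := litW_bd c.st (π c.t)
  have n1 := nextX_bd c.sr
  have n2 := nextX_bd c.ss
  have n3 := nextX_bd c.st
  simp only [teeth, List.forall_mem_cons, List.not_mem_nil, false_imp_iff, implies_true, and_true,
    not_and, not_le]
  rcases h with h | h | h
  · have g := litW_lt_nextX c.sr
    rw [h] at w1 ⊢
    refine ⟨gx c.r + (litW c.sr c.sr + nextX c.sr) / 2, ?_, ?_, ?_, ?_, ?_, ?_, ?_, ?_, ?_⟩ <;>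
      intros <;> linarith
  · have g := litW_lt_nextX c.ss
    rw [h] at w2 ⊢
    refine ⟨gx c.s + (litW c.ss c.ss + nextX c.ss) / 2, ?_, ?_, ?_, ?_, ?_, ?_, ?_, ?_, ?_⟩ <;>
      intros <;> linarith
  · have g := litW_lt_nextX c.st
    rw [h] at w3 ⊢
    refine ⟨gx c.t + (litW c.st c.st + nextX c.st) / 2, ?_, ?_, ?_, ?_, ?_, ?_, ?_, ?_, ?_⟩ <;>
      intros <;> linarith

theorem solution_of_clause {n : ℕ} (c : Clause n) (π : Fin n → Bool)
    (h : π c.r = c.sr ∨ π c.s = c.ss ∨ π c.t = c.st) :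
    (solC c π).AllConn ∧ NetC (solV π) c (solC c π) := by
  have hr := gx_ge c.r
  have hrs := gx_lt c.hrs
  have hst := gx_lt c.hst
  obtain ⟨w1, w1'⟩ := litW_bd c.sr (π c.r)
  obtain ⟨w2, w2'⟩ := litW_bd c.ss (π c.s)
  obtain ⟨w3, w3'⟩ := litW_bd c.st (π c.t)
  obtain ⟨d1, d1'⟩ := litD_bd c.sr (π c.r)
  obtain ⟨d2, d2'⟩ := litD_bd c.ss (π c.s)
  obtain ⟨d3, d3'⟩ := litD_bd c.st (π c.t)
  obtain ⟨n1, n1'⟩ := nextX_bd c.sr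
  obtain ⟨n2, n2'⟩ := nextX_bd c.ss
  obtain ⟨n3, n3'⟩ := nextX_bd c.st
  have hm : ∀ b ∈ teeth c π, b.2.2 ≤ 7 := by
    simp only [teeth, List.forall_mem_cons, List.not_mem_nil, false_imp_iff, implies_true, and_true]
    refine ⟨?_, ?_, ?_, ?_, ?_, ?_, ?_⟩ <;> linarith
  have hmd : (7 : ℝ) < 10 := by norm_num
  have hm0 : (0 : ℝ) ≤ 7 := by norm_num
  obtain ⟨x0, g1, g2, g3⟩ := exists_gap c π h
  have bv := hasBox_hreg (l := gx c.r - 1) (r := gx c.t + 20) hm hmd hm0 (by linarith)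
    (by linarith) g3
  -- points of `v_c` in the gap, under `w₀` and under `w₁`
  have pG : ((x0, -(1 / 2)) : ℝ × ℝ) ∈ hang (gx c.r - 1) (gx c.t + 20) 10 (teeth c π) :=
    ⟨by simp only; linarith, by simp only; linarith, by norm_num, by norm_num,
      fun b hb hc => g3 b hb ⟨hc.1, hc.2.1⟩⟩
  have pW : ((gx c.r - 1 / 2, -(3 / 2)) : ℝ × ℝ) ∈
      hang (gx c.r - 1) (gx c.t + 20) 10 (teeth c π) := by
    refine ⟨by simp only; linarith, by simp only; linarith, by norm_num, by norm_num, ?_⟩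
    simp only [teeth, List.forall_mem_cons, List.not_mem_nil, false_imp_iff, implies_true, and_true]
    refine ⟨?_, ?_, ?_, ?_, ?_, ?_, ?_⟩ <;> rintro ⟨k1, k2, k3⟩ <;> linarith
  have pE : ((gx c.t + 19, -(3 / 2)) : ℝ × ℝ) ∈
      hang (gx c.r - 1) (gx c.t + 20) 10 (teeth c π) := by
    refine ⟨by simp only; linarith, by simp only; linarith, by norm_num, by norm_num, ?_⟩
    simp only [teeth, List.forall_mem_cons, List.not_mem_nil, false_imp_iff, implies_true, and_true]
    refine ⟨?_, ?_, ?_, ?_, ?_, ?_, ?_⟩ <;> rintro ⟨k1, k2, k3⟩ <;> linarith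
  have b0 := hasBox_rect (l := gx c.r - 1) (r := gx c.r + 1) (d := 1) (by linarith) (by norm_num)
  have bur := hasBox_rect (l := gx c.r) (r := gx c.r + litW c.sr (π c.r)) (d := litD c.sr (π c.r))
    (by linarith) (by linarith)
  have bwr := hasBox_rect (l := gx c.r + nextX c.sr) (r := gx c.s + 1) (d := 3)
    (by linarith) (by norm_num)
  have bus := hasBox_rect (l := gx c.s) (r := gx c.s + litW c.ss (π c.s)) (d := litD c.ss (π c.s))
    (by linarith) (by linarith)
  have bws := hasBox_rect (l := gx c.s + nextX c.ss) (r := gx c.t + 1) (d := 3)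
    (by linarith) (by norm_num)
  have but := hasBox_rect (l := gx c.t) (r := gx c.t + litW c.st (π c.t)) (d := litD c.st (π c.t))
    (by linarith) (by linarith)
  have b1 := hasBox_rect (l := gx c.t + nextX c.st) (r := gx c.t + 20) (d := 1)
    (by linarith) (by norm_num)
  have bf : ∀ i : Fin n, HasBox (rect (gx i) (gx i + 3) 3) (gx i) (gx i + 3) 3 :=
    fun i => hasBox_rect (by linarith) (by norm_num)
  have bfn : ∀ i : Fin n, HasBox (rect (gx i) (gx i + 6) 6) (gx i) (gx i + 6) 6 :=
    fun i => hasBox_rect (by linarith) (by norm_num)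
  have bp := hasBox_rect (l := 13) (r := 17) (d := 1) (by norm_num) (by norm_num)
  refine ⟨⟨bv.conn, b0.conn, bwr.conn, bws.conn, b1.conn, bp.conn, bp.conn⟩,
    solV_holds π, ?_⟩
  rw [ustar_solV, ustar_solV, ustar_solV]
  -- the box of a region `x` of `X_c` lies inside that of `v_c`
  have inV : ∀ {l r d : ℝ}, l < r → 0 < d → gx c.r - 1 ≤ l → r ≤ gx c.t + 20 → d ≤ 10 →
      cdc (rect l r d) {Tile.O} (solC c π).vc := fun k1 k2 k3 k4 k5 => rect_O k1 k2 bv k3 k4 k5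
  have mid : ∀ {l r d : ℝ}, l < r → 2 ≤ d → gx c.r ≤ l → r ≤ gx c.t + 7 → (l, r, d) ∈ teeth c π →
      cdc (solC c π).vc {Tile.E, Tile.SE, Tile.S, Tile.SW, Tile.W} (rect l r d) :=
    fun k1 k2 k3 k4 k5 => hreg_middle hm hmd hm0 (hasBox_rect k1 (by linarith)) k5 (by linarith)
      (by linarith) ⟨_, pW, by simp only; linarith, by simp only; linarith⟩
      ⟨_, pE, by simp only; linarith, by simp only; linarith⟩
  refine ⟨netPar_rect (by norm_num) (by norm_num) (by norm_num) (by norm_num) (by linarith)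
      (by linarith),
    netPar_rect (by norm_num) (by norm_num) (by norm_num) (by norm_num) (by linarith)
      (by linarith),
    rect_WO (by linarith) (by norm_num) (bf _) (by linarith) (by linarith) (by linarith)
      (by norm_num),
    rect_ESESO (by linarith) (by norm_num) b0 (by linarith) (by linarith) (by linarith)
      (by norm_num), ?_,
    rect_WO (by linarith) (by norm_num) (bf _) (by linarith) (by linarith) (by linarith)
      (by norm_num),
    rect_EO (by linarith) (by norm_num) bwr (by linarith) (by linarith) (by linarith)
      (by norm_num), ?_,
    rect_WO (by linarith) (by norm_num) (bf _) (by linarith) (by linarith) (by linarith)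
      (by norm_num),
    rect_EO (by linarith) (by norm_num) bws (by linarith) (by linarith) (by linarith)
      (by norm_num), ?_, ?_⟩
  · split_ifs with hb
    · have hx : nextX c.sr = 2 := by rw [hb]; rfl
      exact ⟨rect_WO (by linarith) (by norm_num) bwr (by linarith) (by linarith) (by linarith)
          (by norm_num),
        rect_EO (by linarith) (by norm_num) (bf _) (by linarith) (by linarith) (by linarith)
          (by norm_num)⟩
    · exact ⟨rect_SSWWO (by linarith) (by norm_num) bwr (by linarith) (by linarith) (by linarith)
          (by norm_num),
        rect_EO (by linarith) (by norm_num) (bfn _) (by linarith) (by linarith) (by linarith)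
          (by norm_num)⟩
  · split_ifs with hb
    · have hx : nextX c.ss = 2 := by rw [hb]; rfl
      exact ⟨rect_WO (by linarith) (by norm_num) bws (by linarith) (by linarith) (by linarith)
          (by norm_num),
        rect_EO (by linarith) (by norm_num) (bf _) (by linarith) (by linarith) (by linarith)
          (by norm_num)⟩
    · exact ⟨rect_SSWWO (by linarith) (by norm_num) bws (by linarith) (by linarith) (by linarith)
          (by norm_num),
        rect_EO (by linarith) (by norm_num) (bfn _) (by linarith) (by linarith) (by linarith)
          (by norm_num)⟩
  · split_ifs with hb
    · have hx : nextX c.st = 2 := by rw [hb]; rfl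
      exact ⟨rect_SSWWO (by linarith) (by norm_num) b1 (by linarith) (by linarith) (by linarith)
          (by norm_num),
        rect_EO (by linarith) (by norm_num) (bf _) (by linarith) (by linarith) (by linarith)
          (by norm_num)⟩
    · exact ⟨rect_SSWWO (by linarith) (by norm_num) b1 (by linarith) (by linarith) (by linarith)
          (by norm_num),
        rect_EO (by linarith) (by norm_num) (bfn _) (by linarith) (by linarith) (by linarith)
          (by norm_num)⟩
  · refine ⟨?_, ?_, ?_, ?_, ?_, ?_, ?_, ?_, ?_, ?_, ?_, ?_, ?_, ?_⟩
    iterate 7 exact inV (by linarith) (by linarith) (by linarith) (by linarith) (by linarith)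
    · exact hreg_left hm hmd hm0 b0 (by simp [teeth]) (by linarith)
        ⟨_, pG, by simp only; linarith, by norm_num⟩
    · exact hreg_right hm hmd hm0 b1 (by simp [teeth]) (by linarith)
        ⟨_, pG, by simp only; linarith, by norm_num⟩
    iterate 5
      exact mid (by linarith) (by linarith) (by linarith) (by linarith) (by simp [teeth])

/-- For a clause `c = p_r* ∨ p_s* ∨ p_t*` and a truth assignment
`π`, the following are equivalent: (1) `π` makes at least one of the three
literals true; (2) `N_c` has a solution by connected regions in which, for
each `i ∈ {r, s, t}`, `u_i` is vertical w.r.t. `f_i` iff `π(p_i) = true`. -/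
theorem stmt13 {n : ℕ} (c : Clause n) (π : Fin n → Bool) :
    (π c.r = c.sr ∨ π c.s = c.ss ∨ π c.t = c.st) ↔
      (∃ (S : VAssign n) (C : CAssign),
        S.AllConn ∧ C.AllConn ∧ NetC S c C ∧
        ∀ i ∈ ({c.r, c.s, c.t} : Set (Fin n)),
          (Vert (S.u i) (S.f i) ↔ π i = true)) := by
  constructor
  · intro h
    obtain ⟨h1, h2⟩ := solution_of_clause c π h
    exact ⟨solV π, solC c π, solV_conn π, h1, h2, fun i _ => solV_vert π i⟩
  · rintro ⟨S, C, hS, hC, hN, hV⟩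
    exact clause_of_solution c π S C hS hC hN hV
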